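/- Let 0 < r* < A, λ > 0, define E1(x) = ∫_x^∞ e^{−z}/z dz for x > 0, Ei(x) = γ_E + log x + ∫_0^x (e^t − 1)/t dt for x > 0 (γ_E the Euler–Mascheroni constant), and f_0(R) = (1 − e^{1/r*}·E1(1/r*))·(R − A) + ∫_{1/A}^{1/R} E1(x)·(e^x/x) dx. Suppose f : (0, A] → ℝ is bounded, continuous, twice continuously differentiable on (0, A), satisfies f(A) = 0, and solves −λ·f(R) + f′(R) + R²·f″(R) = e^{1/R}·E1(1/R) − e^{1/r*}·E1(1/r*) on (0, A). Then for every R ∈ (0, A]: f(R) = f_0(R) − λ·[ (Ei(1/A) − A·e^{1/A} − Ei(1/R) + R·e^{1/R})·∫_{1/A}^∞ f(1/z)·(−e^{−z}) dz − ∫_{1/A}^{1/R} f(1/z)·(1/z − e^{−z}·Ei(z)) dz + (Ei(1/R) − R·e^{1/R})·∫_{1/A}^{1/R} f(1/z)·(−e^{−z}) dz ]. -/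

import Mathlib

open MeasureTheory Real Set

/-- The exponential integral `E1 x = ∫_x^∞ e^{-z}/z dz`. -/
noncomputable def E1 (x : ℝ) : ℝ := ∫ z in Set.Ioi x, Real.exp (-z) / z

/-- The second exponential integral for positive arguments:
`Ei x = γ_E + log x + ∫_0^x (e^t - 1)/t dt`. -/
noncomputable def Ei (x : ℝ) : ℝ :=
  Real.eulerMascheroniConstant + Real.log x + ∫ t in (0:ℝ)..x, (Real.exp t - 1) / t

/-!
Put `z = 1 / R`, `a = 1 / A`, `g z = f (1 / z)` and `u z = -f' (1 / z)`. The equation becomes the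
first-order system `g' = u / z²`, `u' = u + w` with `w z = λ g z + e^z E1 z - c`. Hence
`(e^{-z} u)' = e^{-z} w` is integrable and `e^{-z} u` has a limit at infinity. That limit vanishes:
otherwise `g'` would grow like `e^z / z²`, and `g` would be unbounded. So
`u z = -e^z ∫_z^∞ e^{-y} w y dy`. Integrating `g' = u / z²` from `a`, the part of `w` without `g`
gives `f_0`, and the part with `g` is integrated by parts, `Ei z - e^z / z` being an antiderivative
of `e^z / z²`.
-/

open Filter Topology

section Calculus

variable {a : ℝ}

theorem hasDerivAt_integral_Ioi {E : Type*} [NormedAddCommGroup E] [NormedSpace ℝ E]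
    [CompleteSpace E] {q : ℝ → E} {z : ℝ} (hq : IntegrableOn q (Ioi a))
    (hqc : ContinuousOn q (Ioi a)) (hz : a < z) :
    HasDerivAt (fun x => ∫ y in Ioi x, q y) (-q z) z := by
  have hsub : uIcc z z ⊆ Ioi a := by simpa using hz
  have hprim : HasDerivAt (fun x => ∫ y in z..x, q y) (q z) z :=
    intervalIntegral.integral_hasDerivAt_right (hqc.mono hsub).intervalIntegrable
      (hqc.stronglyMeasurableAtFilter isOpen_Ioi z hz) (hqc.continuousAt (Ioi_mem_nhds hz))
  refine (hprim.const_sub (∫ y in Ioi z, q y)).congr_of_eventuallyEq ?_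
  filter_upwards [Ioi_mem_nhds hz] with x hx
  rw [← intervalIntegral.integral_Ioi_sub_Ioi' (hq.mono_set (Ioi_subset_Ioi hz.le))
    (hq.mono_set (Ioi_subset_Ioi (le_of_lt hx))), sub_sub_cancel]

theorem integral_deriv_mul_integral_Ioi {P p q : ℝ → ℝ} {b : ℝ} (hab : a ≤ b)
    (hP : ∀ x ∈ Icc a b, HasDerivAt P (p x) x) (hp : ContinuousOn p (Icc a b))
    (hq : IntegrableOn q (Ioi a)) (hqc : ContinuousOn q (Ici a)) :
    ∫ x in a..b, p x * ∫ y in Ioi x, q y =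
      P b * (∫ y in Ioi b, q y) - P a * (∫ y in Ioi a, q y) + ∫ x in a..b, P x * q x := by
  rw [← uIcc_of_le hab] at hp
  have hIoo : ∀ x ∈ Ioo (min a b) (max a b), x ∈ Ioo a b := by
    simp only [min_eq_left hab, max_eq_right hab, imp_self, implies_true]
  have hparts := intervalIntegral.integral_mul_deriv_eq_deriv_mul_of_hasDerivAt
    (u := P) (v := fun x => ∫ y in Ioi x, q y) (a := a) (b := b)
    (fun x hx => (hP x (uIcc_of_le hab ▸ hx)).continuousAt.continuousWithinAt)
    (hq.continuousOn_Ici_primitive_Ioi.mono (uIcc_of_le hab ▸ Icc_subset_Ici_self))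
    (fun x hx => hP x (Ioo_subset_Icc_self (hIoo x hx)))
    (fun x hx => hasDerivAt_integral_Ioi hq (hqc.mono Ioi_subset_Ici_self) (hIoo x hx).1)
    hp.intervalIntegrable
    (hqc.mono (uIcc_of_le hab ▸ Icc_subset_Ici_self)).neg.intervalIntegrable
  simp only [mul_neg, intervalIntegral.integral_neg] at hparts
  linarith

theorem hasDerivAt_comp_one_div {f : ℝ → ℝ} {f' z : ℝ} (hf : HasDerivAt f f' (1 / z))
    (hz : z ≠ 0) : HasDerivAt (fun x => f (1 / x)) (-f' / z ^ 2) z := by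
  simp only [one_div] at hf ⊢
  exact (hf.comp z (hasDerivAt_inv hz)).congr_deriv (by ring)

end Calculus

section ExponentialIntegrals

variable {z : ℝ}

theorem continuousOn_exp_neg_div : ContinuousOn (fun x : ℝ => exp (-x) / x) (Ioi 0) :=
  (by fun_prop : Continuous fun x : ℝ => exp (-x)).continuousOn.div continuousOn_id
    fun _ hx => ne_of_gt hx

theorem integrableOn_exp_neg_div_Ioi (hz : 0 < z) :
    IntegrableOn (fun x => exp (-x) / x) (Ioi z) := by
  refine Integrable.mono' ((integrableOn_exp_neg_Ioi z).div_const z)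
    ((continuousOn_exp_neg_div.mono (Ioi_subset_Ioi hz.le)).aestronglyMeasurable
      measurableSet_Ioi) ?_
  filter_upwards [ae_restrict_mem measurableSet_Ioi] with x hx
  have hzx : z < x := hx
  have hx0 : 0 < x := hz.trans hzx
  rw [norm_of_nonneg (by positivity)]
  gcongr

theorem E1_nonneg (hz : 0 ≤ z) : 0 ≤ E1 z :=
  setIntegral_nonneg measurableSet_Ioi fun _ hx =>
    div_nonneg (exp_pos _).le (hz.trans (le_of_lt hx))

theorem mul_E1_le_exp_neg (hz : 0 < z) : z * E1 z ≤ exp (-z) := by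
  rw [E1, ← integral_const_mul, ← integral_exp_neg_Ioi z]
  refine setIntegral_mono_on ((integrableOn_exp_neg_div_Ioi hz).const_mul z)
    (integrableOn_exp_neg_Ioi z) measurableSet_Ioi fun x hx => ?_
  have hzx : z < x := hx
  rw [mul_div_left_comm]
  exact mul_le_of_le_one_right (exp_pos _).le ((div_le_one (hz.trans hzx)).2 hzx.le)

theorem hasDerivAt_E1 (hz : 0 < z) : HasDerivAt E1 (-(exp (-z) / z)) z :=
  hasDerivAt_integral_Ioi (integrableOn_exp_neg_div_Ioi (half_pos hz))
    (continuousOn_exp_neg_div.mono (Ioi_subset_Ioi (half_pos hz).le)) (half_lt_self hz)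

theorem continuousOn_E1 : ContinuousOn E1 (Ioi 0) :=
  fun _ hz => (hasDerivAt_E1 hz).continuousAt.continuousWithinAt

theorem hasDerivAt_mul_E1_sub_exp_neg (hz : 0 < z) :
    HasDerivAt (fun x => x * E1 x - exp (-x)) (E1 z) z := by
  refine (((hasDerivAt_id z).mul (hasDerivAt_E1 hz)).sub (hasDerivAt_neg z).exp).congr_deriv ?_
  simp only [id]
  field_simp
  ring

theorem tendsto_mul_E1_sub_exp_neg_atTop :
    Tendsto (fun x => x * E1 x - exp (-x)) atTop (𝓝 0) := by
  have hexp : Tendsto (fun x : ℝ => exp (-x)) atTop (𝓝 0) :=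
    tendsto_exp_neg_atTop_nhds_zero
  have hmul : Tendsto (fun x => x * E1 x) atTop (𝓝 0) := by
    refine squeeze_zero' ?_ ?_ hexp
    · filter_upwards [eventually_ge_atTop 0] with x hx using mul_nonneg hx (E1_nonneg hx)
    · filter_upwards [eventually_gt_atTop 0] with x hx using mul_E1_le_exp_neg hx
  simpa only [sub_zero] using hmul.sub hexp

theorem integrableOn_E1_Ioi (hz : 0 < z) : IntegrableOn E1 (Ioi z) :=
  integrableOn_Ioi_deriv_of_nonneg' (fun _ hx => hasDerivAt_mul_E1_sub_exp_neg (hz.trans_le hx))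
    (fun _ hx => E1_nonneg (hz.trans hx).le) tendsto_mul_E1_sub_exp_neg_atTop

theorem integral_Ioi_E1 (hz : 0 < z) : ∫ y in Ioi z, E1 y = exp (-z) - z * E1 z := by
  rw [integral_Ioi_of_hasDerivAt_of_tendsto'
    (fun _ hx => hasDerivAt_mul_E1_sub_exp_neg (hz.trans_le hx)) (integrableOn_E1_Ioi hz)
    tendsto_mul_E1_sub_exp_neg_atTop]
  ring

theorem continuousOn_E1_mul_exp_div : ContinuousOn (fun x => E1 x * (exp x / x)) (Ioi 0) :=
  continuousOn_E1.mul (continuous_exp.continuousOn.div continuousOn_id fun _ hx => ne_of_gt hx)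

theorem integral_exp_sub_one_div_eq_integral_dslope (x : ℝ) :
    ∫ t in (0 : ℝ)..x, (exp t - 1) / t = ∫ t in (0 : ℝ)..x, dslope exp 0 t := by
  refine intervalIntegral.integral_congr_ae ?_
  filter_upwards [compl_mem_ae_iff.2 (measure_singleton (0 : ℝ))] with t ht _
  rw [dslope_of_ne _ ht, slope_def_field, exp_zero, sub_zero]

theorem hasDerivAt_Ei (hz : 0 < z) : HasDerivAt Ei (exp z / z) z := by
  have hcont : Continuous (dslope exp 0) := by
    rw [← continuousOn_univ, continuousOn_dslope univ_mem]
    exact ⟨continuous_exp.continuousOn, differentiableAt_exp⟩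
  have hEi : Ei = fun x => eulerMascheroniConstant + log x + ∫ t in (0 : ℝ)..x, dslope exp 0 t :=
    funext fun x => by rw [Ei, integral_exp_sub_one_div_eq_integral_dslope]
  rw [hEi]
  refine (((hasDerivAt_log hz.ne').const_add _).add
    (hcont.integral_hasStrictDerivAt 0 z).hasDerivAt).congr_deriv ?_
  rw [dslope_of_ne _ hz.ne', slope_def_field, exp_zero, sub_zero]
  ring

theorem continuousOn_exp_div_sq : ContinuousOn (fun x : ℝ => exp x / x ^ 2) (Ioi 0) :=
  continuous_exp.continuousOn.div (by fun_prop) fun _ hx => pow_ne_zero 2 (ne_of_gt hx)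

/-- The antiderivative `Ei z - e^z / z` of `e^z / z²` on `(0, ∞)`, against which the
equation for `z ↦ f (1 / z)` is integrated by parts. -/
noncomputable def expDivSqPrimitive (z : ℝ) : ℝ := Ei z - exp z / z

theorem hasDerivAt_expDivSqPrimitive (hz : 0 < z) :
    HasDerivAt expDivSqPrimitive (exp z / z ^ 2) z := by
  refine ((hasDerivAt_Ei hz).sub
    ((hasDerivAt_exp z).div (hasDerivAt_id z) hz.ne')).congr_deriv ?_
  simp only [id]
  field_simp
  ring

theorem expDivSqPrimitive_one_div (R : ℝ) :
    expDivSqPrimitive (1 / R) = Ei (1 / R) - R * exp (1 / R) := by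
  rw [expDivSqPrimitive, div_div_eq_mul_div, div_one, mul_comm]

theorem expDivSqPrimitive_mul_exp_neg (z : ℝ) :
    expDivSqPrimitive z * exp (-z) = -(1 / z - exp (-z) * Ei z) := by
  rw [expDivSqPrimitive, exp_neg]
  field_simp
  ring

end ExponentialIntegrals

section BoundedSolutions

variable {g u w m h : ℝ → ℝ} {a L : ℝ}

theorem tendsto_atTop_of_hasDerivAt_tendsto_atTop {g' : ℝ → ℝ}
    (hg : ∀ᶠ z in atTop, HasDerivAt g (g' z) z) (hg' : Tendsto g' atTop atTop) :
    Tendsto g atTop atTop := by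
  obtain ⟨b, hb⟩ := eventually_atTop.1 (hg.and (hg'.eventually_ge_atTop 1))
  have hlower : ∀ᶠ z in atTop, g b + (z - b) ≤ g z := by
    filter_upwards [eventually_ge_atTop b] with z hz
    have := (convex_Ici b).mul_sub_le_image_sub_of_le_deriv (f := g) (C := 1)
      (fun x hx => (hb x hx).1.continuousAt.continuousWithinAt)
      (fun x hx => (hb x (interior_subset hx)).1.differentiableAt.differentiableWithinAt)
      (fun x hx => (hb x (interior_subset hx)).1.deriv ▸ (hb x (interior_subset hx)).2)
      b self_mem_Ici z hz hz
    linarith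
  exact tendsto_atTop_mono' _ hlower
    (tendsto_atTop_add_const_left _ _ (tendsto_atTop_add_const_right _ _ tendsto_id))

theorem limit_nonpos_of_hasDerivAt_mul_of_isBoundedUnder
    (hg : ∀ᶠ z in atTop, HasDerivAt g (m z * h z) z) (hm : Tendsto m atTop (𝓝 L))
    (hh : Tendsto h atTop atTop) (hbdd : IsBoundedUnder (· ≤ ·) atTop g) : L ≤ 0 := by
  by_contra! hL
  exact not_isBoundedUnder_of_tendsto_atTop
    (tendsto_atTop_of_hasDerivAt_tendsto_atTop hg (hm.pos_mul_atTop hL hh)) hbdd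

theorem limit_eq_zero_of_hasDerivAt_mul_of_isBoundedUnder
    (hg : ∀ᶠ z in atTop, HasDerivAt g (m z * h z) z) (hm : Tendsto m atTop (𝓝 L))
    (hh : Tendsto h atTop atTop) (hbdd : IsBoundedUnder (· ≤ ·) atTop fun z => |g z|) :
    L = 0 := by
  obtain ⟨habove, hbelow⟩ := isBoundedUnder_le_abs.1 hbdd
  have hneg : ∀ᶠ z in atTop, HasDerivAt (-g) (-m z * h z) z :=
    hg.mono fun z hz => hz.neg.congr_deriv (neg_mul _ _).symm
  refine le_antisymm (limit_nonpos_of_hasDerivAt_mul_of_isBoundedUnder hg hm hh habove) ?_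
  exact neg_nonpos.1 <| limit_nonpos_of_hasDerivAt_mul_of_isBoundedUnder hneg hm.neg hh
    (isBoundedUnder_le_neg.2 hbelow)

theorem eq_neg_exp_mul_integral_Ioi_of_isBoundedUnder
    (hg : ∀ z ∈ Ioi a, HasDerivAt g (u z / z ^ 2) z)
    (hu : ∀ z ∈ Ioi a, HasDerivAt u (u z + w z) z)
    (hw : IntegrableOn (fun y => exp (-y) * w y) (Ioi a))
    (hbdd : IsBoundedUnder (· ≤ ·) atTop fun z => |g z|) {z : ℝ} (hz : a < z) :
    u z = -(exp z * ∫ y in Ioi z, exp (-y) * w y) := by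
  have hderiv : ∀ x ∈ Ioi a, HasDerivAt (fun y => exp (-y) * u y) (exp (-x) * w x) x :=
    fun x hx => ((hasDerivAt_neg x).exp.mul (hu x hx)).congr_deriv (by ring)
  have hlim := tendsto_limUnder_of_hasDerivAt_of_integrableOn_Ioi hderiv hw
  have hg' : ∀ᶠ x in atTop, HasDerivAt g (exp (-x) * u x * (exp x / x ^ 2)) x := by
    filter_upwards [eventually_gt_atTop a] with x hx
    refine (hg x hx).congr_deriv ?_
    rw [exp_neg]
    field_simp
  rw [limit_eq_zero_of_hasDerivAt_mul_of_isBoundedUnder hg' hlim (tendsto_exp_div_pow_atTop 2)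
    hbdd] at hlim
  rw [integral_Ioi_of_hasDerivAt_of_tendsto' (fun x hx => hderiv x (lt_of_lt_of_le hz hx))
    (hw.mono_set (Ioi_subset_Ioi hz.le)) hlim, zero_sub, mul_neg, neg_neg, ← mul_assoc, ← exp_add,
    add_neg_cancel, exp_zero, one_mul]

theorem integrableOn_exp_neg_mul_Ioi (hgc : ContinuousOn g (Ici a))
    (hbdd : IsBoundedUnder (· ≤ ·) atTop fun z => |g z|) :
    IntegrableOn (fun y => exp (-y) * g y) (Ioi a) := by
  refine integrable_of_isBigO_exp_neg one_pos (by fun_prop) ?_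
  simpa only [neg_one_mul, mul_one] using
    (Asymptotics.isBigO_refl (fun y : ℝ => exp (-y)) atTop).mul (hbdd.isBigO_one ℝ)

end BoundedSolutions

section IntegralEquation

variable {g u : ℝ → ℝ} {a lam c z : ℝ}

theorem exp_neg_mul_source_eq (g : ℝ → ℝ) (lam c y : ℝ) :
    exp (-y) * (lam * g y + exp y * E1 y - c) =
      lam * (exp (-y) * g y) + E1 y - c * exp (-y) := by
  rw [exp_neg]
  field_simp

theorem integrableOn_exp_neg_mul_source (lam c : ℝ) (hz : 0 < z)
    (hg : IntegrableOn (fun y => exp (-y) * g y) (Ioi z)) :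
    IntegrableOn (fun y => exp (-y) * (lam * g y + exp y * E1 y - c)) (Ioi z) := by
  simp only [exp_neg_mul_source_eq]
  exact ((hg.const_mul lam).add (integrableOn_E1_Ioi hz)).sub
    ((integrableOn_exp_neg_Ioi z).const_mul c)

theorem integral_Ioi_exp_neg_mul_source (lam c : ℝ) (hz : 0 < z)
    (hg : IntegrableOn (fun y => exp (-y) * g y) (Ioi z)) :
    ∫ y in Ioi z, exp (-y) * (lam * g y + exp y * E1 y - c) =
      lam * (∫ y in Ioi z, exp (-y) * g y) + (1 - c) * exp (-z) - z * E1 z := by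
  simp only [exp_neg_mul_source_eq]
  have hsum : IntegrableOn (fun y => lam * (exp (-y) * g y) + E1 y) (Ioi z) :=
    (hg.const_mul lam).add (integrableOn_E1_Ioi hz)
  rw [integral_sub hsum ((integrableOn_exp_neg_Ioi z).const_mul c),
    integral_add (hg.const_mul lam) (integrableOn_E1_Ioi hz), integral_const_mul,
    integral_const_mul, integral_Ioi_E1 hz, integral_exp_neg_Ioi]
  ring

theorem intervalIntegrable_exp_div_sq_mul_integral_Ioi {q : ℝ → ℝ} (ha : 0 < a)
    (hq : IntegrableOn q (Ioi a)) (hz : a ≤ z) :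
    IntervalIntegrable (fun x => exp x / x ^ 2 * ∫ y in Ioi x, q y) volume a z :=
  ((continuousOn_exp_div_sq.mono fun _ hx => ha.trans_le hx.1).mul
    (hq.continuousOn_Ici_primitive_Ioi.mono Icc_subset_Ici_self)).intervalIntegrable_of_Icc hz

theorem integral_exp_div_sq_mul_integral_Ioi (ha : 0 < a) (hz : a ≤ z)
    (hgc : ContinuousOn g (Ici a)) (hint : IntegrableOn (fun y => exp (-y) * g y) (Ioi a)) :
    ∫ x in a..z, exp x / x ^ 2 * ∫ y in Ioi x, exp (-y) * g y =
      (expDivSqPrimitive a - expDivSqPrimitive z) * (∫ y in Ioi a, g y * (-exp (-y))) -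
        (∫ x in a..z, g x * (1 / x - exp (-x) * Ei x)) +
        expDivSqPrimitive z * ∫ y in a..z, g y * (-exp (-y)) := by
  have hpos : Icc a z ⊆ Ioi 0 := fun x hx => ha.trans_le hx.1
  have htail := intervalIntegral.integral_Ioi_sub_Ioi hint hz
  have hkernel : ∀ x, expDivSqPrimitive x * (exp (-x) * g x) =
      -(g x * (1 / x - exp (-x) * Ei x)) := fun x => by
    rw [← mul_assoc, expDivSqPrimitive_mul_exp_neg]
    ring
  have hflip : ∀ y, g y * (-exp (-y)) = -(exp (-y) * g y) := fun y => by ring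
  rw [integral_deriv_mul_integral_Ioi hz (fun x hx => hasDerivAt_expDivSqPrimitive (hpos hx))
    (continuousOn_exp_div_sq.mono hpos) hint (by fun_prop)]
  simp only [hkernel, hflip, integral_neg, intervalIntegral.integral_neg]
  rw [← htail]
  ring

/-- The first-order system `g' = u / z²`, `u' = u + λ g + e^z E1 z - c` on `(a, ∞)`, with `g`
continuous up to `a` and bounded at infinity. It is the equation for `f`, with general constant `c`,
after the substitution `z = 1 / R`, `g z = f (1 / z)`, `u z = -f' (1 / z)`. -/
structure IsReciprocalSolution (lam c a : ℝ) (g u : ℝ → ℝ) : Prop where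
  continuousOn : ContinuousOn g (Ici a)
  isBoundedUnder : IsBoundedUnder (· ≤ ·) atTop fun z => |g z|
  hasDerivAt_fst : ∀ z ∈ Ioi a, HasDerivAt g (u z / z ^ 2) z
  hasDerivAt_snd : ∀ z ∈ Ioi a, HasDerivAt u (u z + (lam * g z + exp z * E1 z - c)) z

namespace IsReciprocalSolution

theorem integrableOn_exp_neg_mul (h : IsReciprocalSolution lam c a g u) :
    IntegrableOn (fun y => exp (-y) * g y) (Ioi a) :=
  integrableOn_exp_neg_mul_Ioi h.continuousOn h.isBoundedUnder

theorem div_sq_eq (h : IsReciprocalSolution lam c a g u) (ha : 0 < a) (hz : a < z) :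
    u z / z ^ 2 = -(1 - c) / z ^ 2 + E1 z * (exp z / z) -
      lam * (exp z / z ^ 2 * ∫ y in Ioi z, exp (-y) * g y) := by
  have hz0 : 0 < z := ha.trans hz
  rw [eq_neg_exp_mul_integral_Ioi_of_isBoundedUnder h.hasDerivAt_fst h.hasDerivAt_snd
      (integrableOn_exp_neg_mul_source lam c ha h.integrableOn_exp_neg_mul) h.isBoundedUnder hz,
    integral_Ioi_exp_neg_mul_source lam c hz0
      (h.integrableOn_exp_neg_mul.mono_set (Ioi_subset_Ioi hz.le)), exp_neg]
  field_simp
  ring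

theorem sub_eq_integral (h : IsReciprocalSolution lam c a g u) (ha : 0 < a) (hz : a ≤ z) :
    g z - g a = (1 - c) * (1 / z - 1 / a) + (∫ x in a..z, E1 x * (exp x / x)) -
      lam * ∫ x in a..z, exp x / x ^ 2 * ∫ y in Ioi x, exp (-y) * g y := by
  have hpos : Icc a z ⊆ Ioi 0 := fun x hx => ha.trans_le hx.1
  have hE1i := (continuousOn_E1_mul_exp_div.mono hpos).intervalIntegrable_of_Icc (μ := volume) hz
  have htaili := (intervalIntegrable_exp_div_sq_mul_integral_Ioi ha
    h.integrableOn_exp_neg_mul hz).const_mul lam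
  have hcont : ContinuousOn (fun x => g x - (1 - c) * x⁻¹) (Icc a z) :=
    (h.continuousOn.mono Icc_subset_Ici_self).sub
      (continuousOn_const.mul (continuousOn_id.inv₀ fun x hx => (hpos hx).ne'))
  have hderiv : ∀ x ∈ Ioo a z, HasDerivAt (fun x => g x - (1 - c) * x⁻¹)
      (E1 x * (exp x / x) - lam * (exp x / x ^ 2 * ∫ y in Ioi x, exp (-y) * g y)) x := by
    intro x hx
    refine ((h.hasDerivAt_fst x hx.1).sub
      ((hasDerivAt_inv (ha.trans hx.1).ne').const_mul (1 - c))).congr_deriv ?_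
    rw [h.div_sq_eq ha hx.1]
    ring
  have hftc := intervalIntegral.integral_eq_sub_of_hasDerivAt_of_le hz hcont hderiv
    (hE1i.sub htaili)
  rw [intervalIntegral.integral_sub hE1i htaili, intervalIntegral.integral_const_mul] at hftc
  simp only [one_div]
  linarith

theorem of_ode {A : ℝ} {f : ℝ → ℝ} (hA : 0 < A)
    (hbdd : ∃ C, ∀ x ∈ Ioc 0 A, |f x| ≤ C) (hcont : ContinuousOn f (Ioc 0 A))
    (hf1 : ∀ x ∈ Ioo 0 A, DifferentiableAt ℝ f x)
    (hf2 : ∀ x ∈ Ioo 0 A, DifferentiableAt ℝ (deriv f) x)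
    (hode : ∀ x ∈ Ioo 0 A, -(lam * f x) + deriv f x + x ^ 2 * deriv (deriv f) x =
      exp (1 / x) * E1 (1 / x) - c) :
    IsReciprocalSolution lam c (1 / A) (fun z => f (1 / z)) (fun z => -deriv f (1 / z)) := by
  have ha : 0 < 1 / A := one_div_pos.2 hA
  have hIoc : ∀ z ∈ Ici (1 / A), 1 / z ∈ Ioc 0 A := fun z hz =>
    ⟨one_div_pos.2 (ha.trans_le hz), (one_div_le hA (ha.trans_le hz)).1 hz⟩
  have hIoo : ∀ z ∈ Ioi (1 / A), 1 / z ∈ Ioo 0 A := fun z hz =>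
    ⟨one_div_pos.2 (ha.trans hz), (one_div_lt hA (ha.trans hz)).1 hz⟩
  refine ⟨?continuous, ?bounded, ?fst, ?snd⟩
  case continuous =>
    exact hcont.comp (continuousOn_const.div continuousOn_id fun z hz => (ha.trans_le hz).ne') hIoc
  case bounded =>
    obtain ⟨C, hC⟩ := hbdd
    refine isBoundedUnder_of_eventually_le (a := C) ?_
    filter_upwards [eventually_ge_atTop (1 / A)] with z hz using hC _ (hIoc z hz)
  case fst =>
    intro z hz
    exact hasDerivAt_comp_one_div (hf1 _ (hIoo z hz)).hasDerivAt (ha.trans hz).ne'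
  case snd =>
    intro z hz
    refine (hasDerivAt_comp_one_div (hf2 _ (hIoo z hz)).hasDerivAt
      (ha.trans hz).ne').neg.congr_deriv ?_
    have hode_z := hode _ (hIoo z hz)
    rw [one_div_one_div] at hode_z
    linear_combination hode_z

end IsReciprocalSolution

end IntegralEquation

theorem statement10_general {A lam c : ℝ} (hA : 0 < A) {f : ℝ → ℝ}
    (hbdd : ∃ C, ∀ x ∈ Ioc 0 A, |f x| ≤ C) (hcont : ContinuousOn f (Ioc 0 A))
    (hf1 : ∀ x ∈ Ioo 0 A, DifferentiableAt ℝ f x)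
    (hf2 : ∀ x ∈ Ioo 0 A, DifferentiableAt ℝ (deriv f) x) (hfA : f A = 0)
    (hode : ∀ x ∈ Ioo 0 A, -(lam * f x) + deriv f x + x ^ 2 * deriv (deriv f) x =
      exp (1 / x) * E1 (1 / x) - c) {R : ℝ} (hR : R ∈ Ioc 0 A) :
    f R = (1 - c) * (R - A) + (∫ x in (1 / A)..(1 / R), E1 x * (exp x / x)) - lam *
      ((Ei (1 / A) - A * exp (1 / A) - Ei (1 / R) + R * exp (1 / R)) *
          (∫ z in Ioi (1 / A), f (1 / z) * (-exp (-z))) -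
        (∫ z in (1 / A)..(1 / R), f (1 / z) * (1 / z - exp (-z) * Ei z)) +
        (Ei (1 / R) - R * exp (1 / R)) *
          (∫ z in (1 / A)..(1 / R), f (1 / z) * (-exp (-z)))) := by
  have ha : 0 < 1 / A := one_div_pos.2 hA
  have haR : 1 / A ≤ 1 / R := one_div_le_one_div_of_le hR.1 hR.2
  have hsol : IsReciprocalSolution lam c (1 / A) (fun z => f (1 / z)) (fun z => -deriv f (1 / z)) :=
    .of_ode hA hbdd hcont hf1 hf2 hode
  have heq := hsol.sub_eq_integral ha haR
  rw [integral_exp_div_sq_mul_integral_Ioi ha haR hsol.continuousOn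
    hsol.integrableOn_exp_neg_mul] at heq
  simp only [one_div_one_div, hfA, sub_zero, expDivSqPrimitive_one_div] at heq
  rw [heq]
  ring

/-- Equation (eq:flambda) of the paper: any bounded twice continuously
differentiable solution of `-λ f + f' + R² f'' = e^{1/R}E1(1/R) - e^{1/r*}E1(1/r*)`
on `(0, A)` with `f(A) = 0` satisfies the explicit integral equation used for the
numerical computation of `f_λ`. -/
theorem statement10 (rstar A lam : ℝ) (hrstar : 0 < rstar) (hrA : rstar < A)
    (hlam : 0 < lam)
    (f0 : ℝ → ℝ)
    (hf0 : ∀ R : ℝ, f0 R =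
      (1 - Real.exp (1 / rstar) * E1 (1 / rstar)) * (R - A) +
        ∫ x in (1 / A)..(1 / R), E1 x * (Real.exp x / x))
    (f : ℝ → ℝ)
    (hbdd : ∃ C : ℝ, ∀ x ∈ Set.Ioc (0:ℝ) A, |f x| ≤ C)
    (hcont : ContinuousOn f (Set.Ioc (0:ℝ) A))
    (hf1 : ∀ x ∈ Set.Ioo (0:ℝ) A, DifferentiableAt ℝ f x)
    (hf1c : ContinuousOn (deriv f) (Set.Ioo (0:ℝ) A))
    (hf2 : ∀ x ∈ Set.Ioo (0:ℝ) A, DifferentiableAt ℝ (deriv f) x)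
    (hf2c : ContinuousOn (deriv (deriv f)) (Set.Ioo (0:ℝ) A))
    (hfA : f A = 0)
    (hode : ∀ x ∈ Set.Ioo (0:ℝ) A,
      -(lam * f x) + deriv f x + x ^ 2 * deriv (deriv f) x =
        Real.exp (1 / x) * E1 (1 / x) - Real.exp (1 / rstar) * E1 (1 / rstar)) :
    ∀ R ∈ Set.Ioc (0:ℝ) A,
      f R = f0 R - lam *
        ((Ei (1 / A) - A * Real.exp (1 / A) - Ei (1 / R) + R * Real.exp (1 / R)) *
            (∫ z in Set.Ioi (1 / A), f (1 / z) * (-Real.exp (-z))) -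
          (∫ z in (1 / A)..(1 / R), f (1 / z) * (1 / z - Real.exp (-z) * Ei z)) +
          (Ei (1 / R) - R * Real.exp (1 / R)) *
            (∫ z in (1 / A)..(1 / R), f (1 / z) * (-Real.exp (-z)))) := by
  intro R hR
  rw [hf0]
  exact statement10_general (hrstar.trans hrA) hbdd hcont hf1 hf2 hfA hode hR
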